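/- Let u_o : ℝ → ℝ be bounded, 1-periodic, and Lipschitz (differentiable with bounded derivative suffices). For each N let λ_i^N be reals, ω_i^N = λ_i^N − λ_{i−1}^N, e_i^N = ω_i^N + u_o(λ_i^N) − u_o(λ_{i−1}^N), and fix x ∈ ℝ and w ∈ ℤ with: (i) limsup_{ε→0} limsup_{N→∞} max_{i : |i−Nx|<Nε} N·|ω_{i+1}^N − ω_i^N| < ∞ and (ii) max_{i : |i−Nx|<Nε} |ω_i^N − w| → 0 as N→∞ and then ε→0. Then limsup_{ε→0} limsup_{N→∞} max_{j : |j−Nx|<Nε} |e_j^N − e_{j−1}^N| = 0; that is, when the limit value w is an integer, the profile (e_j^N) is smoothly varying in a mesoscopic neighborhood of x. -/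

import Mathlib

/-!
Since `u_o` is `1`-periodic and `w` is an integer, `u_o (λ_{i-1}) = u_o (λ_{i-1} + w)`; hence
`u_o (λ_i) - u_o (λ_{i-1})` compares the values of `u_o` at two points at distance `|ω_i - w|`, and
the Lipschitz bound yields `|e_i - w| ≤ (1 + L) |ω_i - w|` (`abs_e_sub_le`). So `e` is uniformly
close to `w` wherever `ω` is, and `|e_j - e_{j-1}|` is small by the triangle inequality through `w`.
The site `j - 1` may leave the window of size `ε`, but it lies in the window of size `2ε` as soon
as `N ε ≥ 1`, so the convergence `ω → w` is used at scale `2ε`.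
-/

open Filter
open scoped Classical

/-- The window of lattice sites around `x` at scale `(N, ε)`:
integers `i` with `|i - N·x| < N·ε`. -/
noncomputable def window (N : ℕ) (x ε : ℝ) : Finset ℤ :=
  (Finset.Icc (Int.ceil ((N : ℝ) * x - (N : ℝ) * ε))
      (Int.floor ((N : ℝ) * x + (N : ℝ) * ε))).filter
    (fun i => |(i : ℝ) - (N : ℝ) * x| < (N : ℝ) * ε)

/-- Maximum of a (nonnegative) function over a finite set of integers
(0 if the set is empty). -/
noncomputable def fmax (s : Finset ℤ) (f : ℤ → ℝ) : ℝ :=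
  ((s.sup fun i => Real.toNNReal (f i) : NNReal) : ℝ)

/-- limsup over `N → ∞`, valued in `EReal` to avoid junk values. -/
noncomputable def elimsup (f : ℕ → ℝ) : EReal :=
  Filter.limsup (fun N => ((f N : ℝ) : EReal)) Filter.atTop

/-- `Q(N,ε) → L` as `N → ∞` and then `ε → 0`. -/
def DTendsto (Q : ℕ → ℝ → ℝ) (L : ℝ) : Prop :=
  ∀ δ : ℝ, 0 < δ → ∃ ε₀ : ℝ, 0 < ε₀ ∧ ∀ ε : ℝ, 0 < ε → ε < ε₀ →
    elimsup (fun N => |Q N ε - L|) ≤ (δ : EReal)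

/-- `limsup_{ε→0} limsup_{N→∞} Q(N,ε) < ∞`. -/
def DBddLimsup (Q : ℕ → ℝ → ℝ) : Prop :=
  ∃ ε₀ : ℝ, 0 < ε₀ ∧ ∃ C : ℝ, ∀ ε : ℝ, 0 < ε → ε < ε₀ →
    elimsup (fun N => Q N ε) ≤ (C : EReal)

theorem mem_window {N : ℕ} {x ε : ℝ} {i : ℤ} :
    i ∈ window N x ε ↔ |(i : ℝ) - (N : ℝ) * x| < (N : ℝ) * ε := by
  unfold window
  rw [Finset.mem_filter, Finset.mem_Icc, Int.ceil_le, Int.le_floor]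
  refine ⟨fun h => h.2, fun h => ⟨?_, h⟩⟩
  rw [abs_lt] at h
  constructor <;> linarith [h.1, h.2]

theorem le_fmax {s : Finset ℤ} (f : ℤ → ℝ) {i : ℤ} (hi : i ∈ s) : f i ≤ fmax s f := by
  have h : Real.toNNReal (f i) ≤ s.sup fun i => Real.toNNReal (f i) :=
    Finset.le_sup (f := fun i => Real.toNNReal (f i)) hi
  exact (Real.le_coe_toNNReal (f i)).trans (NNReal.coe_le_coe.2 h)

theorem fmax_nonneg (s : Finset ℤ) (f : ℤ → ℝ) : 0 ≤ fmax s f := NNReal.coe_nonneg _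

theorem fmax_le {s : Finset ℤ} {f : ℤ → ℝ} {c : ℝ} (hc : 0 ≤ c) (h : ∀ i ∈ s, f i ≤ c) :
    fmax s f ≤ c := by
  lift c to NNReal using hc
  unfold fmax
  rw [NNReal.coe_le_coe]
  exact Finset.sup_le fun i hi => Real.toNNReal_le_iff_le_coe.2 (h i hi)

/-- Periodicity lets the integer `w` be subtracted from the increment `b - a`, so that the Lipschitz
bound applies to `b - a - w`. -/
theorem abs_e_sub_le {u : ℝ → ℝ} {L : NNReal} (hper : ∀ y, u (y + 1) = u y)
    (hL : LipschitzWith L u) (a b : ℝ) (w : ℤ) :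
    |(b - a) + u b - u a - w| ≤ (1 + L) * |b - a - w| := by
  have hp : u (a + w) = u a := by
    have := (show Function.Periodic u 1 from hper).int_mul w a
    simpa using this
  have h1 := hL.dist_le_mul b (a + w)
  rw [Real.dist_eq, Real.dist_eq, hp, show b - (a + w) = b - a - w by ring] at h1
  calc |(b - a) + u b - u a - w| = |(b - a - w) + (u b - u a)| := by congr 1; ring
    _ ≤ |b - a - w| + |u b - u a| := abs_add_le _ _
    _ ≤ (1 + L) * |b - a - w| := by linarith

theorem stmt2
    (u_o : ℝ → ℝ) (hbd : ∃ M : ℝ, ∀ y, |u_o y| ≤ M)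
    (hper : ∀ y, u_o (y + 1) = u_o y)
    (hLip : ∃ L : NNReal, LipschitzWith L u_o)
    (lam ω e : ℕ → ℤ → ℝ)
    (hω : ∀ N i, ω N i = lam N i - lam N (i - 1))
    (he : ∀ N i, e N i = ω N i + u_o (lam N i) - u_o (lam N (i - 1)))
    (x : ℝ) (w : ℤ)
    (hi : DBddLimsup (fun N ε =>
      fmax (window N x ε) (fun i => (N : ℝ) * |ω N (i + 1) - ω N i|)))
    (hii : DTendsto (fun N ε =>
      fmax (window N x ε) (fun i => |ω N i - (w : ℝ)|)) 0) :
    DTendsto (fun N ε =>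
      fmax (window N x ε) (fun j => |e N j - e N (j - 1)|)) 0 := by
  obtain ⟨L, hL⟩ := hLip
  intro δ hδ
  have hL0 : (0 : ℝ) < 1 + L := by positivity
  have hη : 0 < δ / (4 * (1 + L)) := by positivity
  obtain ⟨ε₁, hε₁, H⟩ := hii _ hη
  refine ⟨ε₁ / 2, by positivity, fun ε hε hεlt => ?_⟩
  have H2 := H (2 * ε) (by positivity) (by linarith)
  -- The limsup bound holds only up to a loss; a factor `2` turns it into an eventual strict bound.
  have hlt : elimsup (fun N => |fmax (window N x (2 * ε)) (fun i => |ω N i - (w : ℝ)|) - 0|)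
      < ((2 * (δ / (4 * (1 + L))) : ℝ) : EReal) :=
    lt_of_le_of_lt H2 (EReal.coe_lt_coe_iff.2 (by linarith))
  have hev := Filter.eventually_lt_of_limsup_lt hlt
  have hN : ∀ᶠ N : ℕ in atTop, 1 / ε ≤ (N : ℝ) :=
    tendsto_natCast_atTop_atTop.eventually_ge_atTop _
  refine Filter.limsup_le_of_le (by isBoundedDefault) ?_
  filter_upwards [hev, hN] with N h1 h2
  rw [EReal.coe_lt_coe_iff, sub_zero, abs_of_nonneg (fmax_nonneg _ _)] at h1
  rw [EReal.coe_le_coe_iff, sub_zero, abs_of_nonneg (fmax_nonneg _ _)]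
  rw [div_le_iff₀ hε] at h2
  have key : ∀ i ∈ window N x (2 * ε), |e N i - w| ≤ δ / 2 := by
    intro i hiw
    have h3 := (le_fmax (fun i => |ω N i - (w : ℝ)|) hiw).trans h1.le
    have h4 := abs_e_sub_le hper hL (lam N (i - 1)) (lam N i) w
    rw [← hω, ← he] at h4
    calc |e N i - w| ≤ (1 + L) * |ω N i - w| := h4
      _ ≤ (1 + L) * (2 * (δ / (4 * (1 + L)))) := mul_le_mul_of_nonneg_left h3 hL0.le
      _ = δ / 2 := by field_simp; norm_num
  refine fmax_le hδ.le fun j hj => ?_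
  rw [mem_window, abs_lt] at hj
  have k1 := key j (by rw [mem_window, abs_lt]; constructor <;> linarith [hj.1, hj.2])
  have k2 := key (j - 1) (by
    rw [mem_window, abs_lt]; push_cast; constructor <;> linarith [hj.1, hj.2])
  rw [abs_le] at *
  constructor <;> linarith [k1.1, k1.2, k2.1, k2.2]
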